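/- A semi-linear set S ⊆ ℝ^n is essentially convex if and only if S is Horn-DLR. -/

import Mathlib

/-!
A Horn-DLR set is essentially convex because a clause can only fail at infinitely many points of
a segment if all its disequality terms vanish on the whole line; then both endpoints satisfy the
inequality of the clause, and hence so does the segment.

Conversely, let `H` be the finite set of affine functions occurring in a semi-linear description
of `S`, together with the constant `1`. Membership in `S` depends only on the signs of the
functions in `H`. It is shown that `S` is the intersection of all clauses
`(∃ h ∈ T, h x ≠ 0) ∨ ± g x ≤ 0`, with `T ⊆ H` and `g ∈ H`, that contain `S`. For `y ∉ S`, the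
clause excluding `y` has `T = {h ∈ H | h y = 0}`, and `g` is supplied by `exists_separating`:
some `g ∈ H` with `g y ≠ 0` never takes the sign of `g y` on `S ∩ V`, where `V` is the flat on
which `T` vanishes.

To see this, suppose otherwise, and call `h ∈ H` with `h y ≠ 0` bad for `p` if `h p` does not have
the sign of `h y`. Since `1 ∈ H`, the set `S ∩ V` is nonempty. If `p ∈ S ∩ V` has no bad function,
then `p` and `y` have the same signs, so `y ∈ S`. Otherwise (`exists_improvement`) follow
the segment from `p` towards `y` until just before a bad function `g` first changes sign: up to there
the signs do not change, so the segment remains in `S`. From that point move a little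
towards a point `q ∈ S ∩ V` at which `g` has the sign of `g y`. Essential convexity keeps all but
finitely many of these points in `S`; good functions stay good and `g` becomes good. Hence a
point of `S ∩ V` with the least number of bad functions has none.
-/

/-- A set is essentially convex if for all `p, q` in the set, only finitely many
points of the closed segment between `p` and `q` fail to belong to the set. -/
def EssentiallyConvex {n : ℕ} (S : Set (Fin n → ℝ)) : Prop :=
  ∀ p ∈ S, ∀ q ∈ S, (segment ℝ p q \ S).Finite

/-- An affine function with rational coefficients. -/
def IsRatAffine {n : ℕ} (f : (Fin n → ℝ) → ℝ) : Prop :=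
  ∃ (a : Fin n → ℚ) (b : ℚ), ∀ x, f x = (∑ i, (a i : ℝ) * x i) + (b : ℝ)

/-- A basic semi-linear set: finitely many non-strict and strict rational
affine inequalities. -/
def IsBasicSemilinear {n : ℕ} (B : Set (Fin n → ℝ)) : Prop :=
  ∃ (k m : ℕ) (f : Fin k → ((Fin n → ℝ) → ℝ)) (g : Fin m → ((Fin n → ℝ) → ℝ)),
    (∀ i, IsRatAffine (f i)) ∧ (∀ j, IsRatAffine (g j)) ∧
    B = {x : Fin n → ℝ | (∀ i, f i x ≤ 0) ∧ (∀ j, g j x < 0)}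

/-- A semi-linear set: a finite union of basic semi-linear sets. -/
def IsSemilinear {n : ℕ} (S : Set (Fin n → ℝ)) : Prop :=
  ∃ (N : ℕ) (B : Fin N → Set (Fin n → ℝ)),
    (∀ i, IsBasicSemilinear (B i)) ∧ S = ⋃ i, B i

/-- A Horn-DLR clause: either a disjunction of at least one disequality,
or a disjunction of disequalities (possibly none) together with one
non-strict inequality; all terms are rational affine functions. -/
def IsHornDLRClause {n : ℕ} (C : Set (Fin n → ℝ)) : Prop :=
  (∃ (k : ℕ), 1 ≤ k ∧ ∃ f : Fin k → ((Fin n → ℝ) → ℝ),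
      (∀ i, IsRatAffine (f i)) ∧
      C = {x : Fin n → ℝ | ∃ i : Fin k, f i x ≠ 0}) ∨
  (∃ (k : ℕ) (f : Fin k → ((Fin n → ℝ) → ℝ)) (g : (Fin n → ℝ) → ℝ),
      (∀ i, IsRatAffine (f i)) ∧ IsRatAffine g ∧
      C = {x : Fin n → ℝ | (∃ i : Fin k, f i x ≠ 0) ∨ g x ≤ 0})

/-- A Horn-DLR set: a finite intersection of Horn-DLR clauses. -/
def IsHornDLR {n : ℕ} (S : Set (Fin n → ℝ)) : Prop :=
  ∃ (N : ℕ) (C : Fin N → Set (Fin n → ℝ)),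
    (∀ j, IsHornDLRClause (C j)) ∧ S = ⋂ j, C j

open Filter Topology AffineMap

/-! ### Rational affine functions along lines -/

lemma IsRatAffine.apply_lineMap {n : ℕ} {f : (Fin n → ℝ) → ℝ} (hf : IsRatAffine f)
    (p q : Fin n → ℝ) (t : ℝ) : f (lineMap p q t) = (1 - t) * f p + t * f q := by
  obtain ⟨a, b, h⟩ := hf
  simp only [h, lineMap_apply_module, Pi.add_apply, Pi.smul_apply, smul_eq_mul, mul_add,
    Finset.sum_add_distrib, Finset.mul_sum]
  have h1 : ∀ i, (a i : ℝ) * ((1 - t) * p i) = (1 - t) * (a i * p i) := fun i => by ring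
  have h2 : ∀ i, (a i : ℝ) * (t * q i) = t * (a i * q i) := fun i => by ring
  simp only [h1, h2]
  ring

lemma IsRatAffine.neg {n : ℕ} {f : (Fin n → ℝ) → ℝ} (hf : IsRatAffine f) :
    IsRatAffine (-f) := by
  obtain ⟨a, b, h⟩ := hf
  refine ⟨-a, -b, fun x => ?_⟩
  simp [h, Finset.sum_neg_distrib]
  ring

lemma isRatAffine_one {n : ℕ} : IsRatAffine (1 : (Fin n → ℝ) → ℝ) :=
  ⟨0, 1, fun x => by simp⟩

/-! ### Horn-DLR sets are essentially convex -/

lemma clause_essentiallyConvex {n k : ℕ} (f : Fin k → (Fin n → ℝ) → ℝ)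
    (P : (Fin n → ℝ) → Prop) (hf : ∀ i, IsRatAffine (f i))
    (hP : ∀ p q, P p → P q → ∀ t ∈ Set.Icc (0 : ℝ) 1, P (lineMap p q t)) :
    EssentiallyConvex {x | (∃ i, f i x ≠ 0) ∨ P x} := by
  intro p hp q hq
  rw [segment_eq_image_lineMap]
  by_cases h : ∀ i, f i p = 0 ∧ f i q = 0
  · have hp' : P p := hp.resolve_left fun ⟨i, hi⟩ => hi (h i).1
    have hq' : P q := hq.resolve_left fun ⟨i, hi⟩ => hi (h i).2
    convert Set.finite_empty
    rw [Set.eq_empty_iff_forall_notMem]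
    rintro _ ⟨⟨t, ht, rfl⟩, hx⟩
    exact hx (Or.inr (hP p q hp' hq' t ht))
  · push Not at h
    obtain ⟨i, hi⟩ := h
    -- The only possible zero of `f i` on the segment lies at parameter `f i p / (f i p - f i q)`.
    refine (Set.finite_singleton (lineMap p q (f i p / (f i p - f i q)))).subset ?_
    rintro _ ⟨⟨t, ht, rfl⟩, hx⟩
    have h0 : f i (lineMap p q t) = 0 := by
      by_contra h0
      exact hx (Or.inl ⟨i, h0⟩)
    rw [(hf i).apply_lineMap] at h0
    have hne : f i p - f i q ≠ 0 := by
      intro he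
      have : f i p = 0 := by linear_combination h0 + t * he
      exact hi this (by linarith)
    have : t = f i p / (f i p - f i q) := by
      rw [eq_div_iff hne]; linear_combination -h0
    rw [Set.mem_singleton_iff, ← this]

lemma IsHornDLRClause.essentiallyConvex {n : ℕ} {C : Set (Fin n → ℝ)}
    (hC : IsHornDLRClause C) : EssentiallyConvex C := by
  rcases hC with ⟨k, -, f, hf, rfl⟩ | ⟨k, f, g, hf, hg, rfl⟩
  · simpa using clause_essentiallyConvex f (fun _ => False) hf (by simp)
  · refine clause_essentiallyConvex f (fun x => g x ≤ 0) hf ?_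
    intro p q hp hq t ht
    rw [hg.apply_lineMap]
    nlinarith [ht.1, ht.2]

lemma IsHornDLR.essentiallyConvex {n : ℕ} {S : Set (Fin n → ℝ)}
    (hS : IsHornDLR S) : EssentiallyConvex S := by
  obtain ⟨N, C, hC, rfl⟩ := hS
  intro p hp q hq
  rw [Set.mem_iInter] at hp hq
  rw [Set.sdiff_iInter]
  exact Set.finite_iUnion fun j => (hC j).essentiallyConvex p (hp j) q (hq j)

/-! ### Separation by a function of the arrangement -/

/-- Membership in `S` depends only on the signs of the functions in `H`. -/
def SignDetermined {n : ℕ} (H : Set ((Fin n → ℝ) → ℝ)) (S : Set (Fin n → ℝ)) : Prop :=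
  ∀ x ∈ S, ∀ y, (∀ h ∈ H, SignType.sign (h x) = SignType.sign (h y)) → y ∈ S

/-- Essential convexity near an interior parameter of a nondegenerate segment. -/
lemma EssentiallyConvex.eventually_mem {n : ℕ} {S : Set (Fin n → ℝ)}
    (hS : EssentiallyConvex S) {p q : Fin n → ℝ} (hp : p ∈ S) (hq : q ∈ S) (hpq : p ≠ q)
    {d : ℝ} (hd : d ∈ Set.Ioo (0 : ℝ) 1) : ∀ᶠ t in 𝓝[≠] d, lineMap p q t ∈ S := by
  have hfin : {t : ℝ | lineMap p q t ∈ segment ℝ p q \ S}.Finite :=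
    (hS p hp q hq).preimage (lineMap_injective ℝ hpq).injOn
  have h1 : ∀ᶠ t in 𝓝[≠] d, t ∈ Set.Ioo (0 : ℝ) 1 :=
    nhdsWithin_le_nhds (isOpen_Ioo.mem_nhds hd)
  have h2 : ∀ᶠ t in 𝓝[≠] d, t ∉ {t : ℝ | lineMap p q t ∈ segment ℝ p q \ S} := by
    have := (hfin.subset (Set.sdiff_subset (t := {d}))).isClosed.isOpen_compl.mem_nhds
      (x := d) (by simp)
    filter_upwards [nhdsWithin_le_nhds this, self_mem_nhdsWithin] with t ht htd hmem
    exact ht ⟨hmem, htd⟩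
  filter_upwards [h1, h2] with t ht1 ht2
  by_contra hn
  refine ht2 ⟨?_, hn⟩
  rw [segment_eq_image_lineMap]
  exact ⟨t, ⟨ht1.1.le, ht1.2.le⟩, rfl⟩

/-- A function `h ∈ H` with `h y ≠ 0` is bad for `p` if `h p` does not have the sign of `h y`.
Let `V` be the flat on which all functions of `H` vanishing at `y` vanish. If every `h ∈ H` with
`h y ≠ 0` takes the sign of `h y` somewhere on `S ∩ V`, then a point `p ∈ S ∩ V` that has a bad
function can be replaced by a point of `S ∩ V` with strictly fewer of them. -/
lemma exists_improvement {n : ℕ} {H : Set ((Fin n → ℝ) → ℝ)} (hfin : H.Finite)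
    (hH : ∀ h ∈ H, IsRatAffine h) {S : Set (Fin n → ℝ)} (hS : EssentiallyConvex S)
    (hdet : SignDetermined H S) {y : Fin n → ℝ}
    (hq : ∀ h ∈ H, h y ≠ 0 → ∃ q ∈ S, (∀ f ∈ H, f y = 0 → f q = 0) ∧ 0 < h q * h y)
    {p : Fin n → ℝ} (hpS : p ∈ S) (hpV : ∀ f ∈ H, f y = 0 → f p = 0)
    (hbad : {h ∈ H | h y ≠ 0 ∧ h p * h y ≤ 0}.Nonempty) :
    ∃ p' ∈ S, (∀ f ∈ H, f y = 0 → f p' = 0) ∧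
      {h ∈ H | h y ≠ 0 ∧ h p' * h y ≤ 0} ⊂ {h ∈ H | h y ≠ 0 ∧ h p * h y ≤ 0} := by
  -- `τ h` is the parameter at which a bad function `h` vanishes on the segment from `p` to `y`.
  set τ : ((Fin n → ℝ) → ℝ) → ℝ := fun h => -(h p * h y) / (h y * h y - h p * h y) with hτ
  obtain ⟨g, ⟨hgH, hgy, hgp⟩, hmin⟩ :=
    Set.exists_min_image _ τ (hfin.subset (Set.sep_subset _ _)) hbad
  obtain ⟨q, hqS, hqV, hgq⟩ := hq g hgH hgy
  have hpos : ∀ h : (Fin n → ℝ) → ℝ, h y ≠ 0 → 0 < h y * h y := fun h hy => mul_self_pos.2 hy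
  set t := τ g with ht
  have htden : 0 < g y * g y - g p * g y := by linarith [hpos g hgy]
  have ht0 : 0 ≤ t := div_nonneg (by linarith) htden.le
  have ht1 : t < 1 := by
    rw [ht, hτ]; simp only
    rw [div_lt_one htden]; linarith [hpos g hgy]
  have htg : (1 - t) * (g p * g y) + t * (g y * g y) = 0 := by
    have : t * (g y * g y - g p * g y) = -(g p * g y) := div_mul_cancel₀ _ htden.ne'
    linarith
  -- The value, multiplied by `h y`, at the point reached from `p` by moving to parameter `s`
  -- towards `y` and then to parameter `d` towards `q`.
  set φ : ((Fin n → ℝ) → ℝ) → ℝ → ℝ → ℝ := fun h s d =>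
    (1 - d) * ((1 - s) * (h p * h y) + s * (h y * h y)) + d * (h q * h y) with hφ
  have hφeq : ∀ h ∈ H, ∀ s d, h (lineMap (lineMap p y s) q d) * h y = φ h s d := by
    intro h hh s d
    rw [(hH h hh).apply_lineMap, (hH h hh).apply_lineMap]
    ring
  set G : Set ((Fin n → ℝ) → ℝ) := {h ∈ H | 0 < h p * h y} with hG
  have hGfin : G.Finite := hfin.subset (Set.sep_subset _ _)
  have hcont_s : ∀ h d, Continuous fun s => φ h s d := fun h d => by simp only [hφ]; fun_prop
  have hcont_d : ∀ h s, Continuous fun d => φ h s d := fun h s => by simp only [hφ]; fun_prop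
  -- Good functions are positive at parameter `t`, so also after a small move towards `q`.
  obtain ⟨d₀, hd₀, hd₀G, hd₀1⟩ : ∃ d₀ : ℝ, 0 < d₀ ∧ (∀ h ∈ G, 0 < φ h t d₀) ∧ d₀ < 1 := by
    have h1 : ∀ᶠ d in 𝓝[>] (0 : ℝ), ∀ h ∈ G, 0 < φ h t d := by
      refine nhdsWithin_le_nhds ((eventually_all_finite hGfin).2 fun h hh => ?_)
      refine (hcont_d h t).continuousAt.eventually_const_lt ?_
      have : 0 < (1 - t) * (h p * h y) := mul_pos (by linarith) hh.2
      have h3 : 0 ≤ t * (h y * h y) := mul_nonneg ht0 (mul_self_nonneg _)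
      simp only [hφ]; linarith
    have h2 : ∀ᶠ d in 𝓝[>] (0 : ℝ), d < 1 :=
      nhdsWithin_le_nhds (eventually_lt_nhds one_pos)
    obtain ⟨d, hd1, hd2, hd3⟩ := (h1.and (h2.and self_mem_nhdsWithin)).exists
    exact ⟨d, hd3, hd1, hd2⟩
  have hnear : ∀ᶠ s in 𝓝 t, ∀ h ∈ insert g G, 0 < φ h s d₀ := by
    refine (eventually_all_finite (hGfin.insert g)).2 fun h hh => ?_
    refine (hcont_s h d₀).continuousAt.eventually_const_lt ?_
    rcases hh with rfl | hh
    · simp only [hφ]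
      rw [htg]
      have := mul_pos hd₀ hgq
      linarith
    · exact hd₀G h hh
  -- Stop just before parameter `t`, where the signs are still those at `p`; if `t = 0`, stay at `p`.
  obtain ⟨s, hs0, hst, hsS, hspos⟩ : ∃ s : ℝ, 0 ≤ s ∧ s ≤ t ∧ lineMap p y s ∈ S ∧
      ∀ h ∈ insert g G, 0 < φ h s d₀ := by
    rcases ht0.eq_or_lt with h0 | h0
    · refine ⟨t, ht0, le_rfl, ?_, hnear.self_of_nhds⟩
      rw [← h0, lineMap_apply_zero]
      exact hpS
    · have h2 : ∀ᶠ s in 𝓝[<] t, 0 < s := nhdsWithin_le_nhds (eventually_gt_nhds h0)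
      obtain ⟨s, hs1, hs2, hs3⟩ :=
        ((hnear.filter_mono nhdsWithin_le_nhds).and (h2.and self_mem_nhdsWithin)).exists
      refine ⟨s, hs2.le, hs3.le, hdet p hpS _ fun h hh => ?_, hs1⟩
      rw [(hH h hh).apply_lineMap]
      by_cases hy : h y = 0
      · simp [hy, hpV h hh hy]
      -- Comparing signs after multiplication by `h y ≠ 0`.
      have key : SignType.sign (h p * h y) =
          SignType.sign (((1 - s) * h p + s * h y) * h y) := by
        have hyy := hpos h hy
        by_cases hb : h p * h y ≤ 0
        · have hden : 0 < h y * h y - h p * h y := by linarith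
          have hlt : s < τ h := lt_of_lt_of_le hs3 (hmin h ⟨hh, hy, hb⟩)
          have hτpos : 0 < τ h := hs2.trans hlt
          rw [hτ] at hlt hτpos
          simp only at hlt hτpos
          rw [lt_div_iff₀ hden] at hlt
          have hneg : h p * h y < 0 := by
            rcases div_pos_iff.1 hτpos with h' | h' <;> linarith [h'.1, h'.2]
          rw [sign_neg hneg, sign_neg (by linarith)]
        · push Not at hb
          have h1 : 0 < (1 - s) * (h p * h y) := mul_pos (by linarith) hb
          have h2 : 0 ≤ s * (h y * h y) := mul_nonneg hs2.le hyy.le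
          rw [sign_pos hb, sign_pos (by linarith)]
      rw [sign_mul, sign_mul] at key
      exact mul_right_cancel₀ (sign_ne_zero.2 hy) key
  have hne : lineMap p y s ≠ q := by
    intro he
    have h1 : g q = (1 - s) * g p + s * g y := by rw [← he, (hH g hgH).apply_lineMap]
    have h2 : g q * g y = (1 - s) * (g p * g y) + s * (g y * g y) := by rw [h1]; ring
    nlinarith
  have hin := hS.eventually_mem hsS hqS hne ⟨hd₀, hd₀1⟩
  have hpos' : ∀ᶠ d in 𝓝[≠] d₀, ∀ h ∈ insert g G, 0 < φ h s d :=
    nhdsWithin_le_nhds <| (eventually_all_finite (hGfin.insert g)).2 fun h hh =>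
      (hcont_d h s).continuousAt.eventually_const_lt (hspos h hh)
  obtain ⟨d, hdS, hd⟩ := (hin.and hpos').exists
  refine ⟨_, hdS, fun f hf hfy => ?_, ?_⟩
  · rw [(hH f hf).apply_lineMap, (hH f hf).apply_lineMap, hfy, hpV f hf hfy, hqV f hf hfy]
    ring
  · refine (Set.ssubset_iff_of_subset ?_).2 ⟨g, ⟨hgH, hgy, hgp⟩, ?_⟩
    · rintro h ⟨hh, hy, hle⟩
      refine ⟨hh, hy, ?_⟩
      by_contra hgood
      push Not at hgood
      rw [hφeq h hh] at hle
      exact absurd (hd h (Or.inr ⟨hh, hgood⟩)) (not_lt.2 hle)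
    · rintro ⟨-, -, hle⟩
      rw [hφeq g hgH] at hle
      exact absurd (hd g (Or.inl rfl)) (not_lt.2 hle)

lemma exists_separating {n : ℕ} {H : Set ((Fin n → ℝ) → ℝ)} (hfin : H.Finite)
    (hH : ∀ h ∈ H, IsRatAffine h) (hone : 1 ∈ H) {S : Set (Fin n → ℝ)}
    (hS : EssentiallyConvex S) (hdet : SignDetermined H S) {y : Fin n → ℝ} (hy : y ∉ S) :
    ∃ h ∈ H, h y ≠ 0 ∧ ∀ q ∈ S, (∀ f ∈ H, f y = 0 → f q = 0) → h q * h y ≤ 0 := by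
  by_contra! hq
  -- The constant function `1` provides a first point of `S` on the flat.
  obtain ⟨p₀, hp₀S, hp₀V, -⟩ := hq 1 hone (by simp)
  have hex : ∃ p, p ∈ S ∧ ∀ f ∈ H, f y = 0 → f p = 0 := ⟨p₀, hp₀S, hp₀V⟩
  let μ : (Fin n → ℝ) → ℕ := fun p => {h ∈ H | h y ≠ 0 ∧ h p * h y ≤ 0}.ncard
  obtain ⟨p, ⟨hpS, hpV⟩, hmin⟩ := exists_minimalFor_of_wellFoundedLT
    (fun p => p ∈ S ∧ ∀ f ∈ H, f y = 0 → f p = 0) μ hex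
  rcases Set.eq_empty_or_nonempty {h ∈ H | h y ≠ 0 ∧ h p * h y ≤ 0} with he | hne
  · refine hy (hdet p hpS y fun h hh => ?_)
    by_cases h0 : h y = 0
    · rw [h0, hpV h hh h0]
    · have hpos : 0 < h p * h y := by
        by_contra hle
        have : h ∈ {h ∈ H | h y ≠ 0 ∧ h p * h y ≤ 0} := ⟨hh, h0, not_lt.1 hle⟩
        rw [he] at this
        exact this
      rcases pos_and_pos_or_neg_and_neg_of_mul_pos hpos with ⟨h1, h2⟩ | ⟨h1, h2⟩
      · rw [sign_pos h1, sign_pos h2]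
      · rw [sign_neg h1, sign_neg h2]
  · obtain ⟨p', hp'S, hp'V, hlt⟩ := exists_improvement hfin hH hS hdet hq hpS hpV hne
    have hcard : μ p' < μ p := Set.ncard_lt_ncard hlt (hfin.subset (Set.sep_subset _ _))
    exact absurd (hmin ⟨hp'S, hp'V⟩ hcard.le) (not_le.2 hcard)

/-! ### Assembling the clauses -/

lemma IsSemilinear.exists_signDetermined {n : ℕ} {S : Set (Fin n → ℝ)} (hS : IsSemilinear S) :
    ∃ H : Set ((Fin n → ℝ) → ℝ), H.Finite ∧ (∀ h ∈ H, IsRatAffine h) ∧ 1 ∈ H ∧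
      SignDetermined H S := by
  obtain ⟨N, B, hB, rfl⟩ := hS
  choose k m f g hf hg hBeq using hB
  refine ⟨insert 1 (⋃ i, (Set.range (f i) ∪ Set.range (g i))), ?_, ?_, Set.mem_insert _ _, ?_⟩
  · exact (Set.finite_iUnion fun i =>
      (Set.finite_range (f i)).union (Set.finite_range (g i))).insert _
  · rintro h (rfl | hh)
    · exact isRatAffine_one
    · obtain ⟨i, ⟨j, rfl⟩ | ⟨j, rfl⟩⟩ := Set.mem_iUnion.1 hh
      · exact hf i j
      · exact hg i j
  · intro x hx y hxy
    obtain ⟨i, hi⟩ := Set.mem_iUnion.1 hx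
    refine Set.mem_iUnion.2 ⟨i, ?_⟩
    rw [hBeq i] at hi ⊢
    refine ⟨fun j => ?_, fun j => ?_⟩
    · have := hxy (f i j) (Or.inr (Set.mem_iUnion.2 ⟨i, Or.inl ⟨j, rfl⟩⟩))
      rw [← not_lt, ← sign_eq_one_iff, ← this, sign_eq_one_iff, not_lt]
      exact hi.1 j
    · have := hxy (g i j) (Or.inr (Set.mem_iUnion.2 ⟨i, Or.inr ⟨j, rfl⟩⟩))
      rw [← sign_eq_neg_one_iff, ← this, sign_eq_neg_one_iff]
      exact hi.2 j

lemma isHornDLR_of_finite {n : ℕ} {𝒞 : Set (Set (Fin n → ℝ))} (hfin : 𝒞.Finite)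
    (h : ∀ C ∈ 𝒞, IsHornDLRClause C) : IsHornDLR (⋂₀ 𝒞) := by
  obtain ⟨N, C, -, rfl⟩ := hfin.fin_param
  exact ⟨N, C, fun j => h _ ⟨j, rfl⟩, Set.sInter_range C⟩

lemma isHornDLRClause_of_finite {n : ℕ} {T : Set ((Fin n → ℝ) → ℝ)} (hfin : T.Finite)
    (hT : ∀ h ∈ T, IsRatAffine h) {g : (Fin n → ℝ) → ℝ} (hg : IsRatAffine g) :
    IsHornDLRClause {x | (∃ h ∈ T, h x ≠ 0) ∨ g x ≤ 0} := by
  obtain ⟨k, f, -, rfl⟩ := hfin.fin_param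
  exact Or.inr ⟨k, f, g, fun i => hT _ ⟨i, rfl⟩, hg, by simp⟩

lemma EssentiallyConvex.isHornDLR {n : ℕ} {S : Set (Fin n → ℝ)}
    (hS : EssentiallyConvex S) (hsl : IsSemilinear S) : IsHornDLR S := by
  obtain ⟨H, hfin, hH, hone, hdet⟩ := hsl.exists_signDetermined
  let clause : Set ((Fin n → ℝ) → ℝ) × ((Fin n → ℝ) → ℝ) → Set (Fin n → ℝ) :=
    fun c => {x | (∃ h ∈ c.1, h x ≠ 0) ∨ c.2 x ≤ 0}
  let I : Set (Set ((Fin n → ℝ) → ℝ) × ((Fin n → ℝ) → ℝ)) :=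
    (𝒫 H) ×ˢ (H ∪ (fun h => -h) '' H)
  have hI : I.Finite := hfin.finite_subsets.prod (hfin.union (hfin.image _))
  let 𝒞 : Set (Set (Fin n → ℝ)) := {C ∈ clause '' I | S ⊆ C}
  have hSeq : S = ⋂₀ 𝒞 := by
    refine Set.Subset.antisymm (Set.subset_sInter fun C hC => hC.2) fun y hy => ?_
    by_contra hyS
    obtain ⟨h, hh, hy0, hsep⟩ := exists_separating hfin hH hone hS hdet hyS
    -- The clause with disequalities from the functions vanishing at `y` and inequality `g ≤ 0`,
    -- where `g = ± h` has the sign making `g y` positive.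
    have main : ∀ g ∈ H ∪ (fun h => -h) '' H, 0 < g y →
        (∀ q ∈ S, (∀ f ∈ H, f y = 0 → f q = 0) → g q ≤ 0) → False := by
      intro g hg hgy hgS
      have hmem : clause ({f ∈ H | f y = 0}, g) ∈ 𝒞 := by
        refine ⟨⟨_, ⟨Set.sep_subset _ _, hg⟩, rfl⟩, fun q hq => ?_⟩
        by_cases hV : ∀ f ∈ H, f y = 0 → f q = 0
        · exact Or.inr (hgS q hq hV)
        · push Not at hV
          obtain ⟨f, hf, hfy, hfq⟩ := hV
          exact Or.inl ⟨f, ⟨hf, hfy⟩, hfq⟩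
      rcases hy _ hmem with ⟨f, hf, hfy⟩ | hle
      · exact hfy hf.2
      · exact absurd hgy (not_lt.2 hle)
    rcases lt_or_gt_of_ne hy0 with hneg | hpos
    · refine main (-h) (Or.inr ⟨h, hh, rfl⟩) (by simpa using hneg) fun q hq hV => ?_
      have := nonneg_of_mul_nonpos_left (hsep q hq hV) hneg
      simpa using this
    · exact main h (Or.inl hh) hpos fun q hq hV =>
        nonpos_of_mul_nonpos_left (hsep q hq hV) hpos
  rw [hSeq]
  refine isHornDLR_of_finite ((hI.image clause).subset (Set.sep_subset _ _)) ?_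
  rintro _ ⟨⟨⟨T, g⟩, ⟨hT, hg⟩, rfl⟩, -⟩
  refine isHornDLRClause_of_finite (hfin.subset hT) (fun f hf => hH f (hT hf)) ?_
  rcases hg with hg | ⟨f, hf, rfl⟩
  · exact hH g hg
  · exact (hH f hf).neg

theorem semilinear_essentiallyConvex_iff_hornDLR
    (n : ℕ) (S : Set (Fin n → ℝ)) (hS : IsSemilinear S) :
    EssentiallyConvex S ↔ IsHornDLR S :=
  ⟨fun h => h.isHornDLR hS, fun h => h.essentiallyConvex⟩
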